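/- Let M=(Q,Γ,Δ,q₀,γ₀) be a DCPS, (q,γ)∈Q×Γ, and P_{(q,γ)} the thread PDA constructed from M and (q,γ). For all j∈ℕ, p₁,p₂∈Q, w₁,w₂∈Γ*, and finitely supported functions Val,Val' from local configurations to ℕ: there is a run (p₁,(w₁,j),Val)→*(p₂,(w₂,j),Val+Val') in T_{{j}}(M) if and only if there is a word σ∈Γ* such that (p₁,w₁)→*(p₂,w₂) in T(P_{(q,γ)}) via a run labelled σ, Val'((γ',j+1))=|σ|_{γ'} for every γ'∈Γ, and Val' equals 0 on every local configuration not of the form (γ',j+1) with γ'∈Γ. -/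

import Mathlib

namespace DCPSFormal

/-- Rules of a dynamic network of concurrent pushdown systems (DCPS):
creation rules `⟨q,γ⟩ → ⟨q',u⟩ ▷ α` (with `α = none` meaning `ε`),
interruption rules `⟨q,γ⟩ ↦ ⟨q',u⟩`, and resumption rules `q ↦ q' ◁ γ`. -/
inductive Rule (Q Γ : Type*) where
  | cr : Q → Γ → Q → List Γ → Option Γ → Rule Q Γ
  | intr : Q → Γ → Q → List Γ → Rule Q Γ
  | res : Q → Γ → Q → Rule Q Γ

/-- A DCPS: a set of rules, an initial state and an initial stack symbol. -/
structure DCPS (Q Γ : Type*) where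
  rules : Set (Rule Q Γ)
  q0 : Q
  γ0 : Γ

/-- Well-formedness of a DCPS: every pushed word has length at most 2. -/
def IsDCPSWf {Q Γ : Type*} (M : DCPS Q Γ) : Prop :=
  ∀ r ∈ M.rules,
    match r with
    | .cr _ _ _ u _ => u.length ≤ 2
    | .intr _ _ _ u => u.length ≤ 2
    | .res _ _ _ => True

/-- A DCFS is a DCPS in which every pushed word has length at most 1. -/
def IsDCFS {Q Γ : Type*} (M : DCPS Q Γ) : Prop :=
  ∀ r ∈ M.rules,
    match r with
    | .cr _ _ _ u _ => u.length ≤ 1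
    | .intr _ _ _ u => u.length ≤ 1
    | .res _ _ _ => True

/-- A configuration of a DCPS: global state, optional active local configuration
(stack content and switch number), and a finitely supported multiset of pending
local configurations. -/
structure Config (Q Γ : Type*) where
  state : Q
  active : Option (List Γ × ℕ)
  idle : (List Γ × ℕ) →₀ ℕ

/-- The thread possibly spawned by a creation rule with creation component `α`
when the active thread has switch number `i`. -/
noncomputable def spawnOf {Γ : Type*} (α : Option Γ) (i : ℕ) : (List Γ × ℕ) →₀ ℕ :=
  match α with
  | none => 0
  | some a => Finsupp.single ([a], i + 1) 1

/-- The transition system `T(M)` of a DCPS, with steps labelled by rules. -/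
inductive Step {Q Γ : Type*} (M : DCPS Q Γ) : Rule Q Γ → Config Q Γ → Config Q Γ → Prop
  | cr {q γ q' u α w i V} :
      Rule.cr q γ q' u α ∈ M.rules →
      Step M (.cr q γ q' u α) ⟨q, some (γ :: w, i), V⟩ ⟨q', some (u ++ w, i), V + spawnOf α i⟩
  | intr {q γ q' u w i V} :
      Rule.intr q γ q' u ∈ M.rules →
      Step M (.intr q γ q' u) ⟨q, some (γ :: w, i), V⟩
        ⟨q', none, V + Finsupp.single (u ++ w, i + 1) 1⟩
  | res {q γ q' w i V} :
      Rule.res q γ q' ∈ M.rules →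
      Step M (.res q γ q') ⟨q, none, V + Finsupp.single (γ :: w, i) 1⟩ ⟨q', some (γ :: w, i), V⟩

/-- `c ∈ Conf_I(M)`: the active thread exists and its switch number lies in `I`. -/
def ActiveIn {Q Γ : Type*} (I : Set ℕ) (c : Config Q Γ) : Prop :=
  ∃ w i, c.active = some (w, i) ∧ i ∈ I

/-- The `I`-bounded transition system `T_I(M)`. -/
def StepIn {Q Γ : Type*} (M : DCPS Q Γ) (I : Set ℕ) (r : Rule Q Γ) (c c' : Config Q Γ) : Prop :=
  Step M r c c' ∧ (ActiveIn I c ∨ ActiveIn I c')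

/-- Reachability in `T(M)`. -/
def Reaches {Q Γ : Type*} (M : DCPS Q Γ) : Config Q Γ → Config Q Γ → Prop :=
  Relation.ReflTransGen (fun a b => ∃ r, Step M r a b)

/-- Reachability in `T_I(M)`. -/
def ReachesIn {Q Γ : Type*} (M : DCPS Q Γ) (I : Set ℕ) : Config Q Γ → Config Q Γ → Prop :=
  Relation.ReflTransGen (fun a b => ∃ r, StepIn M I r a b)

/-- The initial configuration of a DCPS. -/
noncomputable def initConfig {Q Γ : Type*} (M : DCPS Q Γ) : Config Q Γ :=
  ⟨M.q0, none, Finsupp.single ([M.γ0], 0) 1⟩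

/-- `q` is reachable by `M`. -/
def StateReachable {Q Γ : Type*} (M : DCPS Q Γ) (q : Q) : Prop :=
  ∃ c, Reaches M (initConfig M) c ∧ c.active = none ∧ c.state = q

/-- `q` is `k`-bounded reachable by `M`. -/
def KBoundedReachable {Q Γ : Type*} (M : DCPS Q Γ) (k : ℕ) (q : Q) : Prop :=
  ∃ c, ReachesIn M {i | i ≤ k} (initConfig M) c ∧ c.active = none ∧ c.state = q

/-- `q` is `k`-stratified reachable by `M`. -/
def KStratifiedReachable {Q Γ : Type*} (M : DCPS Q Γ) (k : ℕ) (q : Q) : Prop :=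
  ∃ c : ℕ → Config Q Γ, c 0 = initConfig M ∧
    (∀ l ≤ k, ReachesIn M {l} (c l) (c (l + 1))) ∧
    (c (k + 1)).active = none ∧ (c (k + 1)).state = q

/-- A labelled run in a labelled transition system. -/
inductive LRun {C L : Type*} (step : L → C → C → Prop) : List L → C → C → Prop
  | nil (c) : LRun step [] c c
  | cons {l τ c c' c''} : step l c c' → LRun step τ c' c'' → LRun step (l :: τ) c c''

/-- A pushdown automaton with states `S`, input alphabet `A` and stack alphabet `Γ`. -/
structure PDA (S A Γ : Type*) where
  trans : Set ((S × Γ) × Option A × (S × List Γ))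
  p0 : S
  γ0 : Γ
  final : Set S

/-- A single (possibly `ε`-labelled) step of a PDA. -/
inductive PDAStep {S A Γ : Type*} (P : PDA S A Γ) :
    Option A → (S × List Γ) → (S × List Γ) → Prop
  | mk {p γ a p' u w} : ((p, γ), a, (p', u)) ∈ P.trans →
      PDAStep P a (p, γ :: w) (p', u ++ w)

/-- A run of a PDA labelled by the word obtained by concatenating all non-`ε` labels. -/
inductive PDATrace {S A Γ : Type*} (P : PDA S A Γ) :
    List A → (S × List Γ) → (S × List Γ) → Prop
  | nil (c) : PDATrace P [] c c
  | eps {v c c' c''} : PDAStep P none c c' → PDATrace P v c' c'' → PDATrace P v c c''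
  | cons {a v c c' c''} : PDAStep P (some a) c c' → PDATrace P v c' c'' →
      PDATrace P (a :: v) c c''

/-- The language of a PDA (acceptance by final state). -/
def PDALang {S A Γ : Type*} (P : PDA S A Γ) : Set (List A) :=
  { v | ∃ p w, p ∈ P.final ∧ PDATrace P v (P.p0, [P.γ0]) (p, w) }

/-- A finite state automaton. -/
structure FSA (S A : Type*) where
  trans : Set (S × Option A × S)
  init : Set S
  final : Set S

/-- A run of an FSA labelled by a word (`ε`-labels contribute nothing). -/
inductive FSARun {S A : Type*} (Au : FSA S A) : List A → S → S → Prop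
  | nil (s) : FSARun Au [] s s
  | eps {v s s' s''} : (s, none, s') ∈ Au.trans → FSARun Au v s' s'' → FSARun Au v s s''
  | cons {a v s s' s''} : (s, some a, s') ∈ Au.trans → FSARun Au v s' s'' →
      FSARun Au (a :: v) s s''

/-- The language of an FSA. -/
def FSALang {S A : Type*} (Au : FSA S A) : Set (List A) :=
  { v | ∃ s ∈ Au.init, ∃ s' ∈ Au.final, FSARun Au v s s' }

/-- A vector addition system with states of dimension `n`. -/
structure VASS (n : ℕ) (S A : Type*) where
  δ : S → A → S × (Fin n → ℤ)
  s0 : S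
  v0 : Fin n → ℕ

/-- A step of a VASS: `(q₁,u₁) →ᵃ (q₂,u₂)` iff `δ(q₁,a) = (q₂, u₂ - u₁)`. -/
def VStep {n : ℕ} {S A : Type*} (V : VASS n S A) (a : A) :
    (S × (Fin n → ℕ)) → (S × (Fin n → ℕ)) → Prop :=
  fun c c' => (V.δ c.1 a).1 = c'.1 ∧ ∀ i, (c'.2 i : ℤ) = (c.2 i : ℤ) + (V.δ c.1 a).2 i

/-- Reachability in the transition system of a VASS. -/
def VReaches {n : ℕ} {S A : Type*} (V : VASS n S A) :
    (S × (Fin n → ℕ)) → (S × (Fin n → ℕ)) → Prop :=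
  Relation.ReflTransGen (fun c c' => ∃ a, VStep V a c c')

/-- A state `s` is reachable by the VASS `V`. -/
def VStateReachable {n : ℕ} {S A : Type*} (V : VASS n S A) (s : S) : Prop :=
  ∃ u, VReaches V (V.s0, V.v0) (s, u)

/-- The `i`-th unit vector. -/
def unitVec {m : ℕ} (i : Fin m) : Fin m → ℤ := fun j => if j = i then 1 else 0

/-- Input letters of the thread PDA: either a stack symbol of a spawned thread, or a
context-switch guess `(q, α, q')` with `α ∈ Γ ∪ {ε}`. -/
abbrev TLbl (Q Γ : Type*) := Γ ⊕ (Q × Option Γ × Q)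

/-- The transitions of the thread PDA `P_{(q,γ)}` constructed from a DCPS `M`
(states are `Q ⊕ (Q × Γ)`). -/
inductive TTrans {Q Γ : Type*} (M : DCPS Q Γ) :
    (((Q ⊕ (Q × Γ)) × Γ) × Option (TLbl Q Γ) × ((Q ⊕ (Q × Γ)) × List Γ)) → Prop
  | cr {q₁ γ₁ q₂ u α} : Rule.cr q₁ γ₁ q₂ u α ∈ M.rules →
      TTrans M ((.inl q₁, γ₁), α.map Sum.inl, (.inl q₂, u))
  | intrE {q₁ γ₁ q₂ u} (q₂' : Q) : Rule.intr q₁ γ₁ q₂ u ∈ M.rules →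
      TTrans M ((.inl q₁, γ₁), some (.inr (q₂, none, q₂')), (.inl q₂', u))
  | intrG {q₁ γ₁ q₂ u} (q₂' : Q) (γ' : Γ) : Rule.intr q₁ γ₁ q₂ u ∈ M.rules →
      TTrans M ((.inl q₁, γ₁), some (.inr (q₂, some γ', q₂')), (.inr (q₂', γ'), u))
  | resumeEps {q₁ γ₁ q₂ u} (q₂' : Q) (γ' : Γ) : Rule.intr q₁ γ₁ q₂ u ∈ M.rules →
      TTrans M ((.inr (q₂', γ'), γ'), none, (.inl q₂', [γ']))

/-- The thread PDA `P_{(q,γ)}` constructed from a DCPS `M` and `(q,γ) ∈ Q × Γ`. -/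
def threadPDA {Q Γ : Type*} (M : DCPS Q Γ) (q : Q) (γ : Γ) :
    PDA (Q ⊕ (Q × Γ)) (TLbl Q Γ) Γ where
  trans := { t | TTrans M t }
  p0 := .inl q
  γ0 := γ
  final := { s | ∃ p : Q, s = .inl p }

/-! In `T_{{j}}(M)` the number of threads with switch number `j`, the active one included, never
increases: creation spawns at `j + 1`, resumption only moves a thread with switch number `j` from
idle to active, and an interruption turns one into a thread with switch number `j + 1`. A run from
`Val` to `Val + Val'` with an active thread at both ends cannot lose such a thread, so it is never
interrupted and applies creation rules only. These are exactly the runs of the thread PDA from `Q`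
to `Q` that read letters of `Γ`, because the thread PDA pays for an interruption with a letter
outside `Γ`. -/

section PDA

variable {S S' A A' Γ : Type*} {P : PDA S A Γ} {P' : PDA S' A' Γ} {f : S → S'} {g : A → A'}

theorem PDATrace.head {c c' d : S × List Γ} {a : Option A} {v : List A}
    (ht : PDATrace P v c' d) (hs : PDAStep P a c c') : PDATrace P (a.toList ++ v) c d :=
  match a with
  | none => .eps hs ht
  | some _ => .cons hs ht

/-- `P` is, up to renaming states along `f` and letters along `g`, the automaton `P'` started in the
states in the range of `f` and reading only letters in the range of `g` (and `ε`). Initial and final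
data are ignored. -/
structure PDA.IsRestriction (P : PDA S A Γ) (P' : PDA S' A' Γ) (f : S → S') (g : A → A') :
    Prop where
  injective : Function.Injective f
  trans_iff (p : S) (γ : Γ) (a : Option A) (s : S') (u : List Γ) :
    ((f p, γ), a.map g, (s, u)) ∈ P'.trans ↔ ∃ p', s = f p' ∧ ((p, γ), a, (p', u)) ∈ P.trans

theorem PDA.IsRestriction.step_iff (h : P.IsRestriction P' f g) {a : Option A} {p : S}
    {w : List Γ} {c : S' × List Γ} :
    PDAStep P' (a.map g) (f p, w) c ↔
      ∃ p' w', c = (f p', w') ∧ PDAStep P a (p, w) (p', w') := by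
  constructor
  · rintro ⟨ht⟩
    obtain ⟨p', rfl, ht'⟩ := (h.trans_iff ..).mp ht
    exact ⟨p', _, rfl, .mk ht'⟩
  · rintro ⟨p', w', rfl, ⟨ht⟩⟩
    exact .mk ((h.trans_iff ..).mpr ⟨p', rfl, ht⟩)

theorem PDA.IsRestriction.trace_of_map (h : P.IsRestriction P' f g) {v : List A} {p p' : S}
    {w w' : List Γ} (ht : PDATrace P' (v.map g) (f p, w) (f p', w')) :
    PDATrace P v (p, w) (p', w') := by
  generalize hx : v.map g = x, hc : (f p, w) = c, hd : (f p', w') = d at ht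
  induction ht generalizing v p w with
  | nil =>
    obtain ⟨hp, rfl⟩ := Prod.mk.inj (hc.trans hd.symm)
    obtain rfl := h.injective hp
    obtain rfl := List.map_eq_nil_iff.mp hx
    exact .nil _
  | eps hs _ ih =>
    subst hc
    obtain ⟨_, _, rfl, hs'⟩ := h.step_iff (a := none) |>.mp hs
    exact .eps hs' (ih hx rfl hd)
  | cons hs _ ih =>
    subst hc
    obtain ⟨a, v, rfl, rfl, rfl⟩ := List.map_eq_cons_iff.mp hx
    obtain ⟨_, _, rfl, hs'⟩ := h.step_iff (a := some a) |>.mp hs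
    exact .cons hs' (ih rfl rfl hd)

theorem PDA.IsRestriction.trace_map (h : P.IsRestriction P' f g) {v : List A} {c d : S × List Γ}
    (ht : PDATrace P v c d) : PDATrace P' (v.map g) (f c.1, c.2) (f d.1, d.2) := by
  induction ht with
  | nil => exact .nil _
  | eps hs _ ih => exact .eps (h.step_iff (a := none) |>.mpr ⟨_, _, rfl, hs⟩) ih
  | @cons a _ _ _ _ hs _ ih => exact .cons (h.step_iff (a := some a) |>.mpr ⟨_, _, rfl, hs⟩) ih

end PDA

section DCPS

variable {Q Γ : Type*} {M : DCPS Q Γ}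

/-- The PDA that applies only the creation rules of `M` to the stack of a single thread and reads
the stack symbols of the spawned threads. Its initial and final data are arbitrary. -/
def creationPDA (M : DCPS Q Γ) : PDA Q Γ Γ where
  trans := {t | Rule.cr t.1.1 t.1.2 t.2.2.1 t.2.2.2 t.2.1 ∈ M.rules}
  p0 := M.q0
  γ0 := M.γ0
  final := Set.univ

theorem creationPDA_isRestriction_threadPDA (M : DCPS Q Γ) (q : Q) (γ : Γ) :
    (creationPDA M).IsRestriction (threadPDA M q γ) Sum.inl Sum.inl where
  injective := Sum.inl_injective
  trans_iff p γ₁ a s u := by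
    constructor
    · intro (ht : TTrans M _)
      generalize hb : a.map Sum.inl = b at ht
      cases ht with
      | cr hr =>
        obtain rfl := Option.map_injective Sum.inl_injective hb
        exact ⟨_, rfl, hr⟩
      | intrE => simp at hb
      | intrG => simp at hb
    · rintro ⟨p', rfl, hr⟩
      exact TTrans.cr hr

theorem threadPDA_trace_iff {q : Q} {γ : Γ} {σ : List Γ} {p₁ p₂ : Q} {w₁ w₂ : List Γ} :
    PDATrace (threadPDA M q γ) (σ.map Sum.inl) (.inl p₁, w₁) (.inl p₂, w₂) ↔
      PDATrace (creationPDA M) σ (p₁, w₁) (p₂, w₂) :=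
  have h := creationPDA_isRestriction_threadPDA M q γ
  ⟨h.trace_of_map, h.trace_map⟩

section Spawned

variable [DecidableEq Γ]

/-- The threads spawned by a thread with switch number `j` while it reads `σ`: one thread
`(γ, j + 1)` for each occurrence of `γ` in `σ`. -/
noncomputable def spawnedBy (σ : List Γ) (j : ℕ) : (List Γ × ℕ) →₀ ℕ :=
  (Multiset.toFinsupp (σ : Multiset Γ)).mapDomain fun γ => ([γ], j + 1)

theorem spawnedBy_nil (j : ℕ) : spawnedBy ([] : List Γ) j = 0 := by
  simp [spawnedBy]

theorem spawnedBy_cons (γ : Γ) (σ : List Γ) (j : ℕ) :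
    spawnedBy (γ :: σ) j = spawnOf (some γ) j + spawnedBy σ j := by
  simp only [spawnedBy, spawnOf, ← Multiset.cons_coe, ← Multiset.singleton_add, map_add,
    Multiset.toFinsupp_singleton, Finsupp.mapDomain_add, Finsupp.mapDomain_single]

theorem spawnedBy_toList_append (α : Option Γ) (σ : List Γ) (j : ℕ) :
    spawnedBy (α.toList ++ σ) j = spawnOf α j + spawnedBy σ j :=
  match α with
  | none => (zero_add _).symm
  | some γ => spawnedBy_cons γ σ j

theorem eq_spawnedBy_iff {V : (List Γ × ℕ) →₀ ℕ} {σ : List Γ} {j : ℕ} :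
    V = spawnedBy σ j ↔
      (∀ γ : Γ, V ([γ], j + 1) = σ.count γ) ∧
      ∀ loc : List Γ × ℕ, (¬ ∃ γ : Γ, loc = ([γ], j + 1)) → V loc = 0 := by
  have hinj : Function.Injective fun γ : Γ => ([γ], j + 1) := fun _ _ h => by simpa using h
  have hcount (γ : Γ) : spawnedBy σ j ([γ], j + 1) = σ.count γ :=
    (Finsupp.mapDomain_apply hinj _ γ).trans (by simp)
  have hzero (loc : List Γ × ℕ) (hloc : ¬ ∃ γ : Γ, loc = ([γ], j + 1)) :
      spawnedBy σ j loc = 0 :=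
    Finsupp.mapDomain_of_notMem_range _ _ fun ⟨γ, h⟩ => hloc ⟨γ, h.symm⟩
  constructor
  · rintro rfl
    exact ⟨hcount, hzero⟩
  · rintro ⟨hVcount, hVzero⟩
    ext loc
    by_cases hloc : ∃ γ : Γ, loc = ([γ], j + 1)
    · obtain ⟨γ, rfl⟩ := hloc
      rw [hVcount, hcount]
    · rw [hVzero loc hloc, hzero loc hloc]

end Spawned

/-- The number of threads of `c` with switch number `j`, the active thread included. -/
noncomputable def Config.threadsAt (c : Config Q Γ) (j : ℕ) : ℕ :=
  (c.idle + c.active.elim 0 (Finsupp.single · 1)).mapDomain Prod.snd j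

theorem Config.threadsAt_some (q : Q) (w : List Γ) (i : ℕ) (V : (List Γ × ℕ) →₀ ℕ) (j : ℕ) :
    (⟨q, some (w, i), V⟩ : Config Q Γ).threadsAt j =
      V.mapDomain Prod.snd j + Finsupp.single i 1 j := by
  simp [threadsAt, Finsupp.mapDomain_add, Finsupp.mapDomain_single]

theorem Config.threadsAt_none (q : Q) (V : (List Γ × ℕ) →₀ ℕ) (j : ℕ) :
    (⟨q, none, V⟩ : Config Q Γ).threadsAt j = V.mapDomain Prod.snd j := by
  simp [threadsAt]

theorem mapDomain_snd_spawnOf (α : Option Γ) (j : ℕ) :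
    (spawnOf α j).mapDomain Prod.snd j = 0 := by
  cases α <;> simp [spawnOf, Finsupp.mapDomain_single]

theorem activeIn_some {I : Set ℕ} {q : Q} {w : List Γ} {i : ℕ} {V : (List Γ × ℕ) →₀ ℕ} :
    ActiveIn I (⟨q, some (w, i), V⟩ : Config Q Γ) ↔ i ∈ I := by
  simp [ActiveIn]

theorem not_activeIn_none {I : Set ℕ} {q : Q} {V : (List Γ × ℕ) →₀ ℕ} :
    ¬ ActiveIn I (⟨q, none, V⟩ : Config Q Γ) := by
  simp [ActiveIn]

theorem StepIn.threadsAt_le {j : ℕ} {r : Rule Q Γ} {c c' : Config Q Γ}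
    (h : StepIn M {j} r c c') : c'.threadsAt j ≤ c.threadsAt j := by
  obtain ⟨hstep, hact⟩ := h
  cases hstep with
  | @cr _ _ _ _ _ _ i =>
    obtain rfl : i = j := by simpa [activeIn_some] using hact
    simp [Config.threadsAt_some, Finsupp.mapDomain_add, mapDomain_snd_spawnOf]
  | @intr _ _ _ _ _ i =>
    obtain rfl : i = j := by simpa [activeIn_some, not_activeIn_none] using hact
    simp [Config.threadsAt_some, Config.threadsAt_none, Finsupp.mapDomain_add,
      Finsupp.mapDomain_single]
  | res =>
    simp [Config.threadsAt_some, Config.threadsAt_none, Finsupp.mapDomain_add,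
      Finsupp.mapDomain_single]

theorem ReachesIn.threadsAt_le {j : ℕ} {c c' : Config Q Γ} (h : ReachesIn M {j} c c') :
    c'.threadsAt j ≤ c.threadsAt j := by
  induction h with
  | refl => exact le_rfl
  | tail _ hs ih =>
    obtain ⟨r, hs⟩ := hs
    exact hs.threadsAt_le.trans ih

theorem Step.exists_creationPDA_step {j : ℕ} {r : Rule Q Γ} {p : Q} {w : List Γ}
    {V : (List Γ × ℕ) →₀ ℕ} {c : Config Q Γ} (h : Step M r ⟨p, some (w, j), V⟩ c)
    (hle : Config.threadsAt ⟨p, some (w, j), V⟩ j ≤ c.threadsAt j) :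
    ∃ α p' w', PDAStep (creationPDA M) α (p, w) (p', w') ∧
      c = ⟨p', some (w', j), V + spawnOf α j⟩ := by
  cases h with
  | cr hr => exact ⟨_, _, _, .mk hr, rfl⟩
  | intr _ =>
    simp [Config.threadsAt_some, Config.threadsAt_none, Finsupp.mapDomain_add,
      Finsupp.mapDomain_single] at hle

theorem ReachesIn.exists_creationPDA_trace [DecidableEq Γ] {j : ℕ} {p₁ p₂ : Q} {w₁ w₂ : List Γ}
    {V₁ V₂ : (List Γ × ℕ) →₀ ℕ}
    (h : ReachesIn M {j} ⟨p₁, some (w₁, j), V₁⟩ ⟨p₂, some (w₂, j), V₂⟩)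
    (hle : Config.threadsAt ⟨p₁, some (w₁, j), V₁⟩ j ≤ Config.threadsAt ⟨p₂, some (w₂, j), V₂⟩ j) :
    ∃ σ, PDATrace (creationPDA M) σ (p₁, w₁) (p₂, w₂) ∧ V₂ = V₁ + spawnedBy σ j := by
  generalize hc : (⟨p₁, some (w₁, j), V₁⟩ : Config Q Γ) = c at h hle
  induction h using Relation.ReflTransGen.head_induction_on generalizing p₁ w₁ V₁ with
  | refl =>
    cases hc
    exact ⟨[], .nil _, by rw [spawnedBy_nil, add_zero]⟩
  | head hs hrest ih =>
    subst hc
    obtain ⟨r, hs⟩ := hs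
    obtain ⟨α, p', w', hα, rfl⟩ :=
      hs.1.exists_creationPDA_step (hle.trans (ReachesIn.threadsAt_le hrest))
    obtain ⟨σ, ht, hV⟩ := ih rfl (hs.threadsAt_le.trans hle)
    exact ⟨α.toList ++ σ, ht.head hα, by rw [hV, spawnedBy_toList_append, add_assoc]⟩

theorem ReachesIn.head_creationPDA_step {I : Set ℕ} {j : ℕ} (hj : j ∈ I) {α : Option Γ}
    {c c' : Q × List Γ} {V : (List Γ × ℕ) →₀ ℕ} {d : Config Q Γ}
    (hs : PDAStep (creationPDA M) α c c')
    (h : ReachesIn M I ⟨c'.1, some (c'.2, j), V + spawnOf α j⟩ d) :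
    ReachesIn M I ⟨c.1, some (c.2, j), V⟩ d := by
  obtain ⟨hr⟩ := hs
  exact Relation.ReflTransGen.head ⟨_, .cr hr, .inl (activeIn_some.mpr hj)⟩ h

theorem reachesIn_of_creationPDA_trace [DecidableEq Γ] {I : Set ℕ} {j : ℕ} (hj : j ∈ I)
    {σ : List Γ} {c d : Q × List Γ} (h : PDATrace (creationPDA M) σ c d)
    (V : (List Γ × ℕ) →₀ ℕ) :
    ReachesIn M I ⟨c.1, some (c.2, j), V⟩ ⟨d.1, some (d.2, j), V + spawnedBy σ j⟩ := by
  induction h generalizing V with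
  | nil =>
    rw [spawnedBy_nil, add_zero]
    exact Relation.ReflTransGen.refl
  | eps hs _ ih => exact ReachesIn.head_creationPDA_step hj hs (by simpa [spawnOf] using ih V)
  | cons hs _ ih =>
    rw [spawnedBy_cons, ← add_assoc]
    exact ReachesIn.head_creationPDA_step hj hs (ih _)

theorem thread_pda_characterization_general [DecidableEq Γ] (M : DCPS Q Γ) (q : Q) (γ : Γ) (j : ℕ)
    (p₁ p₂ : Q) (w₁ w₂ : List Γ) (Val Val' : (List Γ × ℕ) →₀ ℕ) :
    ReachesIn M {j} ⟨p₁, some (w₁, j), Val⟩ ⟨p₂, some (w₂, j), Val + Val'⟩ ↔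
    ∃ σ : List Γ,
      PDATrace (threadPDA M q γ) (σ.map Sum.inl) (.inl p₁, w₁) (.inl p₂, w₂) ∧
      (∀ γ' : Γ, Val' ([γ'], j + 1) = σ.count γ') ∧
      (∀ loc : List Γ × ℕ, (¬ ∃ γ' : Γ, loc = ([γ'], j + 1)) → Val' loc = 0) := by
  simp only [threadPDA_trace_iff, ← eq_spawnedBy_iff]
  constructor
  · intro h
    have hle : Config.threadsAt ⟨p₁, some (w₁, j), Val⟩ j ≤
        Config.threadsAt ⟨p₂, some (w₂, j), Val + Val'⟩ j := by
      simp [Config.threadsAt_some, Finsupp.mapDomain_add]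
    obtain ⟨σ, ht, hV⟩ := h.exists_creationPDA_trace hle
    exact ⟨σ, ht, add_left_cancel hV⟩
  · rintro ⟨σ, ht, rfl⟩
    exact reachesIn_of_creationPDA_trace (Set.mem_singleton j) ht Val

end DCPS

/-- A run of a single thread of the DCPS `M` in `T_{{j}}(M)` from
`(p₁,(w₁,j),Val)` to `(p₂,(w₂,j),Val+Val')` corresponds exactly to a run of the thread
PDA `P_{(q,γ)}` from `(p₁,w₁)` to `(p₂,w₂)` labelled by a word `σ ∈ Γ*` whose letter
counts describe `Val'`. -/
theorem thread_pda_characterization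
    (Q Γ : Type) [Fintype Q] [Fintype Γ] [DecidableEq Γ]
    (M : DCPS Q Γ) (hwf : IsDCPSWf M) (hfin : M.rules.Finite)
    (q : Q) (γ : Γ) (j : ℕ) (p₁ p₂ : Q) (w₁ w₂ : List Γ)
    (Val Val' : (List Γ × ℕ) →₀ ℕ) :
    ReachesIn M {j} ⟨p₁, some (w₁, j), Val⟩ ⟨p₂, some (w₂, j), Val + Val'⟩ ↔
    ∃ σ : List Γ,
      PDATrace (threadPDA M q γ) (σ.map Sum.inl) (.inl p₁, w₁) (.inl p₂, w₂) ∧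
      (∀ γ' : Γ, Val' ([γ'], j + 1) = σ.count γ') ∧
      (∀ loc : List Γ × ℕ, (¬ ∃ γ' : Γ, loc = ([γ'], j + 1)) → Val' loc = 0) := by
  exact thread_pda_characterization_general M q γ j p₁ p₂ w₁ w₂ Val Val'

end DCPSFormal
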